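/- Let G be a connected graph on n vertices with m edges, chromatic number χ and independence number θ, and let 0 ≤ α < 1. Then S_χ(A_α(G)) ≥ 2αm/θ. -/

import Mathlib

open Matrix Finset Real

/-- The `A_α`-matrix of a graph: `A_α(G) = α·D(G) + (1−α)·A(G)`. -/
noncomputable def Aalpha {n : ℕ} (α : ℝ) (G : SimpleGraph (Fin n)) [DecidableRel G.Adj] :
    Matrix (Fin n) (Fin n) ℝ :=
  α • Matrix.diagonal (fun i => (G.degree i : ℝ)) + (1 - α) • G.adjMatrix ℝ

/-- The sum of the `k` largest eigenvalues of a real symmetric matrix, expressed as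
the supremum over all `k`-subsets of indices of the corresponding eigenvalue sums. -/
noncomputable def Sk {n : ℕ} (M : Matrix (Fin n) (Fin n) ℝ) (k : ℕ) : ℝ :=
  if h : M.IsHermitian then
    sSup {x : ℝ | ∃ s : Finset (Fin n), s.card = k ∧ x = ∑ i ∈ s, h.eigenvalues i}
  else 0

/-- The independence number of a graph: the largest size of a set of pairwise
non-adjacent vertices. -/
noncomputable def indepNumber {n : ℕ} (G : SimpleGraph (Fin n)) : ℕ :=
  sSup {k | ∃ s : Finset (Fin n), (∀ u ∈ s, ∀ v ∈ s, ¬G.Adj u v) ∧ s.card = k}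

/-!
The `k` largest of `n` real numbers average at least as much as all `n` of them, so
`k · tr M ≤ n · S_k(M)` for a real symmetric matrix `M`. For `M = A_α(G)` the trace is `2αm`, and
`n ≤ θk` because a proper colouring with `k` colours splits the vertices into `k` independent sets.
Since `2αm ≥ 0`, these combine to `n · 2αm ≤ θk · 2αm ≤ θ · n · S_k`.
-/

section TopSums

variable {ι M : Type*} [LinearOrder M]

theorem exists_subset_card_eq_forall_le {t : Finset ι} {k : ℕ} (hk : k ≤ #t) (f : ι → M) :
    ∃ s ⊆ t, #s = k ∧ ∀ i ∈ s, ∀ j ∈ t, j ∉ s → f j ≤ f i := by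
  classical
  induction k with
  | zero => exact ⟨∅, empty_subset t, card_empty, by simp⟩
  | succ k ih =>
    obtain ⟨s, hst, hs, htop⟩ := ih (by lia)
    have hne : (t \ s).Nonempty := by
      rw [← card_pos, card_sdiff_of_subset hst]
      lia
    obtain ⟨a, ha, hmax⟩ := exists_max_image (t \ s) f hne
    obtain ⟨hat, has⟩ := mem_sdiff.mp ha
    refine ⟨insert a s, insert_subset hat hst, by rw [card_insert_of_notMem has, hs], ?_⟩
    intro i hi j hjt hj
    obtain ⟨-, hjs⟩ : j ≠ a ∧ j ∉ s := by simpa only [mem_insert, not_or] using hj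
    obtain rfl | his := mem_insert.mp hi
    · exact hmax j (mem_sdiff.mpr ⟨hjt, hjs⟩)
    · exact htop i his j hjt hjs

variable [AddCommMonoid M] [IsOrderedCancelAddMonoid M]

-- Chebyshev's sum inequality, applied to `f` and the indicator function of `s`.
theorem card_smul_sum_le_card_smul_sum_of_forall_le {s t : Finset ι} (hst : s ⊆ t) {f : ι → M}
    (htop : ∀ i ∈ s, ∀ j ∈ t, j ∉ s → f j ≤ f i) :
    #s • ∑ i ∈ t, f i ≤ #t • ∑ i ∈ s, f i := by
  classical
  have hmono : MonovaryOn (fun i ↦ if i ∈ s then 1 else 0 : ι → ℕ) f t := by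
    intro i _ j hj hlt
    by_cases his : i ∈ s
    · have hjs : j ∈ s := by_contra fun hjs ↦ (htop i his j hj hjs).not_gt hlt
      simp only [his, hjs, le_refl]
    · simp only [his, if_false, Nat.zero_le]
  simpa [inter_eq_right.mpr hst] using hmono.sum_smul_sum_le_card_smul_sum

end TopSums

section EigenvalueSums

variable {n : ℕ} {M : Matrix (Fin n) (Fin n) ℝ}

theorem sum_eigenvalues_le_Sk (hM : M.IsHermitian) (s : Finset (Fin n)) :
    ∑ i ∈ s, hM.eigenvalues i ≤ Sk M #s := by
  rw [Sk, dif_pos hM]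
  refine le_csSup (Set.Finite.bddAbove ?_) ⟨s, rfl, rfl⟩
  refine (Set.finite_range fun u : Finset (Fin n) ↦ ∑ i ∈ u, hM.eigenvalues i).subset ?_
  rintro _ ⟨u, -, rfl⟩
  exact Set.mem_range_self u

theorem mul_trace_le_mul_Sk (hM : M.IsHermitian) {k : ℕ} (hk : k ≤ n) :
    k * M.trace ≤ n * Sk M k := by
  obtain ⟨s, hs, rfl, htop⟩ := exists_subset_card_eq_forall_le
    (t := univ) (by simpa only [card_fin] using hk) hM.eigenvalues
  calc (#s : ℝ) * M.trace = #s * ∑ i, hM.eigenvalues i := by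
        simp only [hM.trace_eq_sum_eigenvalues, RCLike.ofReal_real_eq_id, id]
    _ ≤ n * ∑ i ∈ s, hM.eigenvalues i := by
        simpa only [nsmul_eq_mul, card_fin] using
          card_smul_sum_le_card_smul_sum_of_forall_le hs htop
    _ ≤ n * Sk M #s := by gcongr; exact sum_eigenvalues_le_Sk hM s

end EigenvalueSums

theorem card_le_indepNum_mul_card_of_coloring {V κ : Type*} [Fintype V] [Fintype κ]
    {G : SimpleGraph V} (C : G.Coloring κ) :
    Fintype.card V ≤ G.indepNum * Fintype.card κ := by
  classical
  refine card_le_mul_card_image_of_maps_to (f := C) (fun v _ ↦ mem_univ (C v)) _ fun c _ ↦ ?_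
  refine SimpleGraph.IsIndepSet.card_le_indepNum ?_
  simpa only [coe_filter_univ, SimpleGraph.Coloring.colorClass] using C.isIndepSet_colorClass c

theorem indepNumber_eq_indepNum {n : ℕ} (G : SimpleGraph (Fin n)) :
    indepNumber G = G.indepNum := by
  have hindep (s : Finset (Fin n)) : (∀ u ∈ s, ∀ v ∈ s, ¬G.Adj u v) ↔ G.IsIndepSet s :=
    ⟨fun h u hu v hv _ ↦ h u hu v hv, fun h u hu v hv huv ↦ h hu hv huv.ne huv⟩
  simp only [indepNumber, SimpleGraph.indepNum, SimpleGraph.isNIndepSet_iff, hindep]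

section AlphaMatrix

variable {n : ℕ} (G : SimpleGraph (Fin n)) [DecidableRel G.Adj] (α : ℝ)

theorem isHermitian_Aalpha : (Aalpha α G).IsHermitian :=
  ((G.isHermitian_degMatrix ℝ).smul (IsSelfAdjoint.all α)).add
    ((G.isHermitian_adjMatrix ℝ).smul (IsSelfAdjoint.all (1 - α)))

theorem trace_Aalpha : (Aalpha α G).trace = 2 * α * #G.edgeFinset := by
  have hdeg : ∑ v, (G.degree v : ℝ) = 2 * #G.edgeFinset := by
    exact_mod_cast G.sum_degrees_eq_twice_card_edges
  calc (Aalpha α G).trace = α * ∑ v, (G.degree v : ℝ) := by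
        simp only [Aalpha, trace_add, trace_smul, trace_diagonal, SimpleGraph.trace_adjMatrix,
          smul_eq_mul, mul_zero, add_zero]
    _ = 2 * α * #G.edgeFinset := by rw [hdeg]; ring

end AlphaMatrix

theorem stmt17_general {n : ℕ} (hn : 0 < n) (G : SimpleGraph (Fin n)) [DecidableRel G.Adj]
    {α : ℝ} (hα : 0 ≤ α) {k : ℕ} (hcol : G.Colorable k) (hk : k ≤ n) :
    2 * α * #G.edgeFinset / indepNumber G ≤ Sk (Aalpha α G) k := by
  obtain ⟨C⟩ := hcol
  have hcard : n ≤ indepNumber G * k := by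
    simpa only [indepNumber_eq_indepNum, Fintype.card_fin] using
      card_le_indepNum_mul_card_of_coloring C
  have hθ : 0 < indepNumber G := Nat.pos_of_mul_pos_right (hn.trans_le hcard)
  have htrace : k * (2 * α * #G.edgeFinset) ≤ n * Sk (Aalpha α G) k := by
    simpa only [trace_Aalpha] using mul_trace_le_mul_Sk (isHermitian_Aalpha G α) hk
  rw [div_le_iff₀' (Nat.cast_pos.mpr hθ)]
  refine le_of_mul_le_mul_left ?_ (Nat.cast_pos.mpr hn : (0 : ℝ) < n)
  calc (n : ℝ) * (2 * α * #G.edgeFinset)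
      ≤ (indepNumber G * k) * (2 * α * #G.edgeFinset) := by gcongr; exact_mod_cast hcard
    _ = indepNumber G * (k * (2 * α * #G.edgeFinset)) := by ring
    _ ≤ indepNumber G * (n * Sk (Aalpha α G) k) := by gcongr
    _ = n * (indepNumber G * Sk (Aalpha α G) k) := by ring

theorem stmt17 {n : ℕ} (G : SimpleGraph (Fin n)) [DecidableRel G.Adj] (hG : G.Connected)
    (α : ℝ) (hα0 : 0 ≤ α) (hα1 : α < 1)
    (m : ℕ) (hm : G.edgeFinset.card = m)
    (χ : ℕ) (hχ : G.chromaticNumber = (χ : ℕ∞))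
    (θ : ℕ) (hθ : θ = indepNumber G) :
    Sk (Aalpha α G) χ ≥ 2 * α * m / θ := by
  subst hm hθ
  exact stmt17_general (Fin.pos_iff_nonempty.mpr hG.nonempty) G hα0
    (SimpleGraph.chromaticNumber_le_iff_colorable.mp hχ.le)
    (by simpa [hχ] using G.chromaticNumber_le_card)
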